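/- arXiv:2403.06150 — 2 statements merged into one kernel-verified Lean document; each statement's English description precedes it below -/
import Mathlib

section
/- In the Bertrand pricing game with incomplete information with n ≥ 2 firms, in every Bayesian Nash equilibrium every firm's expected profit equals 0. -/
open Classical

/-- The set of winning firms at signal profile `s` and WTP `ω`, under strategy profile `p`:
those firms quoting the minimal price, provided that price is at most the buyer's WTP. -/
noncomputable def winners {ι : Type*} [Fintype ι] [Nonempty ι] {S : ι → Type*}
    (p : ∀ i, S i → ℝ) (s : ∀ i, S i) (ω : ℝ) : Finset ι :=
  Finset.univ.filter fun j =>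
    p j (s j) = Finset.univ.inf' Finset.univ_nonempty (fun k => p k (s k)) ∧ p j (s j) ≤ ω

/-- Realized profit of firm `i`: its price divided by the number of winners if it wins,
and `0` otherwise. -/
noncomputable def realizedProfit {ι : Type*} [Fintype ι] [Nonempty ι] {S : ι → Type*}
    (p : ∀ i, S i → ℝ) (s : ∀ i, S i) (ω : ℝ) (i : ι) : ℝ :=
  if i ∈ winners p s ω then p i (s i) / (winners p s ω).card else 0

/-- Expected profit of firm `i` under the joint distribution `μ` on signal profiles and WTPs. -/
noncomputable def expProfit {ι : Type*} [Fintype ι] [Nonempty ι] [DecidableEq ι]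
    {S : ι → Type*} [∀ i, Fintype (S i)] (μ : (∀ i, S i) → ℝ → ℝ) (Ω : Finset ℝ)
    (p : ∀ i, S i → ℝ) (i : ι) : ℝ :=
  ∑ s : ∀ i, S i, ∑ ω ∈ Ω, μ s ω * realizedProfit p s ω i

/-- Bayesian Nash equilibrium: no firm can strictly increase its expected profit by a
unilateral change of its own strategy. -/
def isBNE {ι : Type*} [Fintype ι] [Nonempty ι] [DecidableEq ι] {S : ι → Type*}
    [∀ i, Fintype (S i)] (μ : (∀ i, S i) → ℝ → ℝ) (Ω : Finset ℝ)
    (p : ∀ i, S i → ℝ) : Prop :=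
  ∀ i : ι, ∀ q : S i → ℝ, expProfit μ Ω (Function.update p i q) i ≤ expProfit μ Ω p i

/-!
Quoting `0` guarantees a nonnegative profit, so only sales at positive prices have to be excluded.
Let `P > 0` be the greatest price at which a sale occurs with positive probability, say by firm `i`,
and let another firm `j` cut to `c < P` every price it quotes above `c`. By maximality of `P` this
costs `j` at most `P - c` wherever it was selling, while in the event where `i` sells at `P` it
raises the profit of `j` from at most `P / 2` to `c`. In equilibrium the cut does not pay, which is
impossible as `c` tends to `P`.
-/

open Filter Topology

section RealizedProfit

variable {ι : Type*} [Fintype ι] [Nonempty ι] {S : ι → Type*}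
  {p : ∀ i, S i → ℝ} {s : ∀ i, S i} {ω : ℝ} {i j : ι}

lemma mem_winners : i ∈ winners p s ω ↔ (∀ k, p i (s i) ≤ p k (s k)) ∧ p i (s i) ≤ ω := by
  have min_le_price (k : ι) :
      Finset.univ.inf' Finset.univ_nonempty (fun k => p k (s k)) ≤ p k (s k) :=
    Finset.inf'_le _ (Finset.mem_univ k)
  simp only [winners, Finset.mem_filter, Finset.mem_univ, true_and]
  refine and_congr_left fun _ => ⟨fun h k => h.trans_le (min_le_price k), fun h => ?_⟩
  exact le_antisymm (Finset.le_inf' _ _ fun k _ => h k) (min_le_price i)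

lemma price_eq_of_mem_winners (hi : i ∈ winners p s ω) (hj : j ∈ winners p s ω) :
    p i (s i) = p j (s j) :=
  le_antisymm ((mem_winners.1 hi).1 j) ((mem_winners.1 hj).1 i)

lemma realizedProfit_of_mem (hi : i ∈ winners p s ω) :
    realizedProfit p s ω i = p i (s i) / (winners p s ω).card :=
  if_pos hi

lemma realizedProfit_of_notMem (hi : i ∉ winners p s ω) : realizedProfit p s ω i = 0 :=
  if_neg hi

lemma realizedProfit_nonneg (h : 0 ≤ p i (s i)) : 0 ≤ realizedProfit p s ω i := by
  unfold realizedProfit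
  positivity

lemma realizedProfit_nonpos (h : i ∈ winners p s ω → p i (s i) ≤ 0) :
    realizedProfit p s ω i ≤ 0 := by
  by_cases hi : i ∈ winners p s ω
  · rw [realizedProfit_of_mem hi]
    exact div_nonpos_of_nonpos_of_nonneg (h hi) (Nat.cast_nonneg _)
  · rw [realizedProfit_of_notMem hi]

lemma realizedProfit_le_price (h : 0 ≤ p i (s i)) : realizedProfit p s ω i ≤ p i (s i) := by
  by_cases hi : i ∈ winners p s ω
  · rw [realizedProfit_of_mem hi]
    exact div_le_self h (Nat.one_le_cast.2 (Finset.card_pos.2 ⟨i, hi⟩))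
  · rwa [realizedProfit_of_notMem hi]

lemma realizedProfit_le_half_price (hi : i ∈ winners p s ω) (h : 0 ≤ p i (s i)) (hji : j ≠ i) :
    realizedProfit p s ω j ≤ p i (s i) / 2 := by
  by_cases hj : j ∈ winners p s ω
  · have two_le_card : 2 ≤ (winners p s ω).card := Finset.one_lt_card.2 ⟨j, hj, i, hi, hji⟩
    rw [realizedProfit_of_mem hj, price_eq_of_mem_winners hj hi]
    exact div_le_div_of_nonneg_left h two_pos (Nat.ofNat_le_cast.2 two_le_card)
  · rw [realizedProfit_of_notMem hj]
    positivity

lemma realizedProfit_of_winners_eq_singleton (h : winners p s ω = {i}) :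
    realizedProfit p s ω i = p i (s i) := by
  simp [realizedProfit, h]

lemma realizedProfit_congr {q : ∀ i, S i → ℝ} (h : ∀ k, p k (s k) = q k (s k)) :
    realizedProfit p s ω i = realizedProfit q s ω i := by
  have winners_eq : winners p s ω = winners q s ω := by
    ext k
    simp only [mem_winners, h]
  rw [realizedProfit, realizedProfit, winners_eq, h]

end RealizedProfit

section Undercut

variable {ι : Type*} [DecidableEq ι] {S : ι → Type*}

/-- The unilateral deviation in which firm `j` lowers to `c` every price it quotes above `c`.
Capping the whole strategy, rather than changing the price at a single signal, makes its effect on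
realized profits independent of the signal profile. -/
noncomputable def undercut (p : ∀ i, S i → ℝ) (j : ι) (c : ℝ) : ∀ i, S i → ℝ :=
  Function.update p j fun t => min (p j t) c

variable {p : ∀ i, S i → ℝ} {s : ∀ i, S i} {ω c P : ℝ} {i j k : ι}

@[simp]
lemma undercut_self (t : S j) : undercut p j c j t = min (p j t) c := by
  simp [undercut]

@[simp]
lemma undercut_of_ne (h : k ≠ j) : undercut p j c k = p k :=
  Function.update_of_ne h _ _

lemma undercut_eq_of_le (h : p j (s j) ≤ c) (k : ι) : undercut p j c k (s k) = p k (s k) := by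
  obtain rfl | hk := eq_or_ne k j
  · simpa using h
  · rw [undercut_of_ne hk]

variable [Fintype ι] [Nonempty ι]

lemma winners_undercut (hi : i ∈ winners p s ω) (hc : c < p i (s i)) :
    winners (undercut p j c) s ω = {j} := by
  obtain ⟨hmin, hω⟩ := mem_winners.1 hi
  have price_j : undercut p j c j (s j) = c := by
    rw [undercut_self, min_eq_right (hc.le.trans (hmin j))]
  have lt_price {k : ι} (hk : k ≠ j) : c < undercut p j c k (s k) := by
    rw [undercut_of_ne hk]
    exact hc.trans_le (hmin k)
  refine Finset.eq_singleton_iff_unique_mem.2 ⟨mem_winners.2 ?_, fun k hk => ?_⟩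
  · rw [price_j]
    refine ⟨fun k => ?_, hc.le.trans hω⟩
    obtain rfl | hk := eq_or_ne k j
    exacts [price_j.ge, (lt_price hk).le]
  · by_contra hkj
    exact (lt_price hkj).not_ge (((mem_winners.1 hk).1 j).trans_eq price_j)

lemma realizedProfit_undercut (hi : i ∈ winners p s ω) (hc : c < p i (s i)) :
    realizedProfit (undercut p j c) s ω j = c := by
  have hj : c ≤ p j (s j) := hc.le.trans ((mem_winners.1 hi).1 j)
  rw [realizedProfit_of_winners_eq_singleton (winners_undercut hi hc), undercut_self,
    min_eq_right hj]

lemma realizedProfit_le_undercut_add (hc : 0 ≤ c) (hcP : c ≤ P)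
    (hP : j ∈ winners p s ω → p j (s j) ≤ P) :
    realizedProfit p s ω j ≤ realizedProfit (undercut p j c) s ω j + (P - c) := by
  obtain hjc | hjc := le_or_gt (p j (s j)) c
  · rw [realizedProfit_congr (undercut_eq_of_le hjc)]
    linarith
  by_cases hj : j ∈ winners p s ω
  · rw [realizedProfit_undercut hj hjc, add_sub_cancel]
    exact (realizedProfit_le_price (hc.trans hjc.le)).trans (hP hj)
  · have undercut_nonneg : 0 ≤ realizedProfit (undercut p j c) s ω j :=
      realizedProfit_nonneg (by simp [hc, hc.trans hjc.le])
    rw [realizedProfit_of_notMem hj]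
    linarith

end Undercut

section SalePrices

variable {ι : Type*} [Fintype ι] [Nonempty ι] {S : ι → Type*}
  {μ : (∀ i, S i) → ℝ → ℝ} {Ω : Finset ℝ} {p : ∀ i, S i → ℝ}

/-- The prices at which, under the strategy profile `p`, some firm sells with positive
probability. -/
def salePrices (μ : (∀ i, S i) → ℝ → ℝ) (Ω : Finset ℝ) (p : ∀ i, S i → ℝ) : Set ℝ :=
  {x | ∃ s, ∃ ω ∈ Ω, ∃ i ∈ winners p s ω, 0 < μ s ω ∧ p i (s i) = x}

lemma salePrices_finite [∀ i, Finite (S i)] : (salePrices μ Ω p).Finite := by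
  refine (Set.finite_range fun x : (∀ i, S i) × ι => p x.2 (x.1 x.2)).subset ?_
  rintro x ⟨s, -, -, i, -, -, rfl⟩
  exact ⟨(s, i), rfl⟩

end SalePrices

section Equilibrium

variable {ι : Type*} [Fintype ι] [Nonempty ι] [DecidableEq ι] {S : ι → Type*}
  [∀ i, Fintype (S i)] {μ : (∀ i, S i) → ℝ → ℝ} {Ω : Finset ℝ} {p : ∀ i, S i → ℝ}

lemma expProfit_nonpos (hμ : ∀ s ω, 0 ≤ μ s ω) (h : ∀ x ∈ salePrices μ Ω p, x ≤ 0) (i : ι) :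
    expProfit μ Ω p i ≤ 0 := by
  refine Finset.sum_nonpos fun s _ => Finset.sum_nonpos fun ω hω => ?_
  obtain hμs | hμs := (hμ s ω).eq_or_lt
  · rw [← hμs, zero_mul]
  · exact mul_nonpos_of_nonneg_of_nonpos hμs.le
      (realizedProfit_nonpos fun hi => h _ ⟨s, ω, hω, i, hi, hμs, rfl⟩)

lemma isBNE.expProfit_nonneg (hp : isBNE μ Ω p) (hμ : ∀ s ω, 0 ≤ μ s ω) (i : ι) :
    0 ≤ expProfit μ Ω p i :=
  calc
    0 ≤ expProfit μ Ω (Function.update p i 0) i :=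
      Finset.sum_nonneg fun s _ => Finset.sum_nonneg fun ω _ =>
        mul_nonneg (hμ s ω) (realizedProfit_nonneg (by simp))
    _ ≤ expProfit μ Ω p i := hp i 0

lemma mul_half_le_expProfit_undercut_sub_add (hμ : ∀ s ω, 0 ≤ μ s ω) {P c : ℝ}
    (hP : P ∈ upperBounds (salePrices μ Ω p)) (hc : 0 ≤ c) (hcP : c < P)
    {s : ∀ i, S i} {ω : ℝ} (hω : ω ∈ Ω) {i j : ι} (hi : i ∈ winners p s ω)
    (hiP : p i (s i) = P) (hji : j ≠ i) :
    μ s ω * (P / 2) ≤ expProfit μ Ω (undercut p j c) j - expProfit μ Ω p j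
      + (∑ s, ∑ ω ∈ Ω, μ s ω) * (P - c) := by
  -- The summand `P - c` makes the gain nonnegative in every event of positive probability, so that
  -- the event `(s, ω)` alone bounds the expectation from below.
  let gain (s : ∀ i, S i) (ω : ℝ) : ℝ :=
    realizedProfit (undercut p j c) s ω j - realizedProfit p s ω j + (P - c)
  have gain_nonneg (s : ∀ i, S i) (ω : ℝ) (hω : ω ∈ Ω) : 0 ≤ μ s ω * gain s ω := by
    obtain hμs | hμs := (hμ s ω).eq_or_lt
    · rw [← hμs, zero_mul]
    · have le_undercut := realizedProfit_le_undercut_add hc hcP.le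
        fun hj : j ∈ winners p s ω => hP ⟨s, ω, hω, j, hj, hμs, rfl⟩
      exact mul_nonneg hμs.le (by linarith)
  have half_le_gain : P / 2 ≤ gain s ω := by
    have before : realizedProfit p s ω j ≤ P / 2 :=
      hiP ▸ realizedProfit_le_half_price hi (by linarith) hji
    have after : realizedProfit (undercut p j c) s ω j = c :=
      realizedProfit_undercut hi (hiP ▸ hcP)
    linarith
  calc
    μ s ω * (P / 2) ≤ μ s ω * gain s ω := mul_le_mul_of_nonneg_left half_le_gain (hμ s ω)
    _ ≤ ∑ ω ∈ Ω, μ s ω * gain s ω :=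
      Finset.single_le_sum (f := fun ω => μ s ω * gain s ω) (gain_nonneg s) hω
    _ ≤ ∑ s, ∑ ω ∈ Ω, μ s ω * gain s ω :=
      Finset.single_le_sum (f := fun s => ∑ ω ∈ Ω, μ s ω * gain s ω)
        (fun s _ => Finset.sum_nonneg (gain_nonneg s)) (Finset.mem_univ s)
    _ = _ := by
      simp only [gain, expProfit, mul_add, mul_sub, Finset.sum_add_distrib,
        Finset.sum_sub_distrib, Finset.sum_mul]

lemma isBNE.nonpos_of_isGreatest_salePrices [Nontrivial ι] (hp : isBNE μ Ω p)
    (hμ : ∀ s ω, 0 ≤ μ s ω) {P : ℝ} (hP : IsGreatest (salePrices μ Ω p) P) : P ≤ 0 := by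
  by_contra! P_pos
  obtain ⟨⟨s, ω, hω, i, hi, hμs, hiP⟩, P_max⟩ := hP
  obtain ⟨j, hji⟩ := exists_ne i
  have le_loss (c : ℝ) (hc : c ∈ Set.Ioo 0 P) :
      μ s ω * (P / 2) ≤ (∑ s, ∑ ω ∈ Ω, μ s ω) * (P - c) := by
    have no_gain : expProfit μ Ω (undercut p j c) j ≤ expProfit μ Ω p j := hp j _
    linarith [mul_half_le_expProfit_undercut_sub_add hμ P_max hc.1.le hc.2 hω hi hiP hji]
  have loss_tendsto : Tendsto (fun c => (∑ s, ∑ ω ∈ Ω, μ s ω) * (P - c)) (𝓝[<] P) (𝓝 0) :=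
    ((by fun_prop : Continuous _).tendsto' P 0 (by simp)).mono_left nhdsWithin_le_nhds
  have nonpos : μ s ω * (P / 2) ≤ 0 :=
    ge_of_tendsto loss_tendsto (mem_of_superset (Ioo_mem_nhdsLT P_pos) le_loss)
  exact nonpos.not_gt (by positivity)

lemma isBNE.salePrices_nonpos [Nontrivial ι] (hp : isBNE μ Ω p) (hμ : ∀ s ω, 0 ≤ μ s ω) :
    ∀ x ∈ salePrices μ Ω p, x ≤ 0 := by
  intro x hx
  obtain ⟨P, hP, P_max⟩ := Set.exists_max_image _ id salePrices_finite ⟨x, hx⟩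
  exact (P_max x hx).trans (hp.nonpos_of_isGreatest_salePrices hμ ⟨hP, P_max⟩)

end Equilibrium

theorem BNE_expProfit_eq_zero_general {ι : Type*} [Fintype ι] [Nontrivial ι] [DecidableEq ι]
    {S : ι → Type*} [∀ i, Fintype (S i)] (Ω : Finset ℝ) (μ : (∀ i, S i) → ℝ → ℝ)
    (hμ : ∀ s ω, 0 ≤ μ s ω) (p : ∀ i, S i → ℝ) (hp : isBNE μ Ω p) (i : ι) :
    expProfit μ Ω p i = 0 :=
  le_antisymm (expProfit_nonpos hμ (hp.salePrices_nonpos hμ) i) (hp.expProfit_nonneg hμ i)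

/-- with `n ≥ 2` firms, in every Bayesian Nash equilibrium every firm's
expected profit equals `0`. -/
theorem BNE_expProfit_eq_zero
    {ι : Type*} [Fintype ι] [Nonempty ι] [DecidableEq ι] (hn : 2 ≤ Fintype.card ι)
    {S : ι → Type*} [∀ i, Fintype (S i)]
    (Ω : Finset ℝ) (hΩpos : ∀ ω ∈ Ω, 0 < ω)
    (μ : (∀ i, S i) → ℝ → ℝ)
    (hμ0 : ∀ s ω, 0 ≤ μ s ω)
    (hμ1 : ∑ s : ∀ i, S i, ∑ ω ∈ Ω, μ s ω = 1)
    (p : ∀ i, S i → ℝ) (hp : isBNE μ Ω p) :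
    ∀ i : ι, expProfit μ Ω p i = 0 := by
  have : Nontrivial ι := Fintype.one_lt_card_iff_nontrivial.1 hn
  exact BNE_expProfit_eq_zero_general Ω μ hμ0 p hp
end

section
/- In the Bertrand pricing game with incomplete information with exactly two firms, a strategy profile p is a Bayesian Nash equilibrium if and only if each firm i quotes p_i(s_i) = 0 at every signal s_i that has strictly positive marginal probability under μ. -/
open Classical

/-- Realized profit of a firm quoting `a` when its (unique) rival quotes `b` and the buyer's
WTP is `ω`: it earns `a` if it strictly undercuts the rival and `a ≤ ω`, half of `a` on a
tie with `a ≤ ω`, and `0` otherwise.  This is the two-firm specialization of the winner set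
`W(s,ω)` of the Bertrand pricing game with incomplete information. -/
noncomputable def pay (a b ω : ℝ) : ℝ :=
  if a < b ∧ a ≤ ω then a else if a = b ∧ a ≤ ω then a / 2 else 0

/-- Expected profit of firm 1 under the joint distribution `μ` on signal pairs and WTPs. -/
noncomputable def expProfit1 {S₁ S₂ : Type*} [Fintype S₁] [Fintype S₂]
    (μ : S₁ → S₂ → ℝ → ℝ) (Ω : Finset ℝ) (p₁ : S₁ → ℝ) (p₂ : S₂ → ℝ) : ℝ :=
  ∑ s₁ : S₁, ∑ s₂ : S₂, ∑ ω ∈ Ω, μ s₁ s₂ ω * pay (p₁ s₁) (p₂ s₂) ω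

/-- Expected profit of firm 2 under the joint distribution `μ` on signal pairs and WTPs. -/
noncomputable def expProfit2 {S₁ S₂ : Type*} [Fintype S₁] [Fintype S₂]
    (μ : S₁ → S₂ → ℝ → ℝ) (Ω : Finset ℝ) (p₁ : S₁ → ℝ) (p₂ : S₂ → ℝ) : ℝ :=
  ∑ s₁ : S₁, ∑ s₂ : S₂, ∑ ω ∈ Ω, μ s₁ s₂ ω * pay (p₂ s₂) (p₁ s₁) ω

/-- Bayesian Nash equilibrium of the two-firm Bertrand pricing game with incomplete
information: no firm can strictly increase its expected profit by a unilateral deviation. -/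
def isBNE2 {S₁ S₂ : Type*} [Fintype S₁] [Fintype S₂]
    (μ : S₁ → S₂ → ℝ → ℝ) (Ω : Finset ℝ) (p₁ : S₁ → ℝ) (p₂ : S₂ → ℝ) : Prop :=
  (∀ q₁ : S₁ → ℝ, expProfit1 μ Ω q₁ p₂ ≤ expProfit1 μ Ω p₁ p₂) ∧
  (∀ q₂ : S₂ → ℝ, expProfit2 μ Ω p₁ q₂ ≤ expProfit2 μ Ω p₁ p₂)

/-!
Against a rival who never quotes above `x > 0`, the price `x` earns only on ties, so shading it to
`c * x` with `1 / 2 < c < 1` multiplies the profit by at least `2 * c > 1`. Hence an optimal quote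
with a positive profit lies strictly below some price that the rival quotes with positive
probability. If in equilibrium a positive price meets some rival signal, both firms make a positive
profit at these signals, and applying the remark to each firm in turn yields a strictly higher price
of the same firm, which is impossible with finitely many signals.

A firm quoting a negative price must always be strictly undercut, since winning would be a loss
compared with quoting `0`, and two firms cannot strictly undercut each other.
-/

section Pay

variable {a b c ω : ℝ}

lemma pay_zero_left : pay 0 b ω = 0 := by
  simp [pay]

lemma pay_of_lt_of_le (hab : a < b) (haω : a ≤ ω) : pay a b ω = a :=
  if_pos ⟨hab, haω⟩

lemma pay_self_of_le (haω : a ≤ ω) : pay a a ω = a / 2 := by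
  simp [pay, haω]

lemma pay_eq_zero_of_gt (hba : b < a) : pay a b ω = 0 := by
  simp [pay, hba.not_gt, hba.ne']

lemma pay_eq_zero_of_wtp_lt (hωa : ω < a) : pay a b ω = 0 := by
  simp [pay, hωa.not_ge]

lemma pay_nonneg (ha : 0 ≤ a) : 0 ≤ pay a b ω := by
  unfold pay; split_ifs <;> linarith

lemma pay_nonpos (ha : a ≤ 0) : pay a b ω ≤ 0 := by
  unfold pay; split_ifs <;> linarith

lemma pay_neg (ha : a < 0) (hab : a ≤ b) (haω : a ≤ ω) : pay a b ω < 0 := by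
  rcases hab.lt_or_eq with hlt | rfl
  · rwa [pay_of_lt_of_le hlt haω]
  · rw [pay_self_of_le haω]; linarith

lemma pay_zero_right_nonpos : pay a 0 ω ≤ 0 := by
  rcases le_or_gt a 0 with ha | ha
  · exact pay_nonpos ha
  · exact (pay_eq_zero_of_gt ha).le

lemma two_mul_mul_pay_le_pay_mul (ha : 0 < a) (hba : b ≤ a) (hc₀ : 0 ≤ c) (hc₁ : c < 1) :
    2 * c * pay a b ω ≤ pay (c * a) b ω := by
  have hca : c * a < a := mul_lt_of_lt_one_left ha hc₁
  have hca_nonneg : 0 ≤ c * a := mul_nonneg hc₀ ha.le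
  rcases hba.lt_or_eq with hlt | rfl
  · simpa [pay_eq_zero_of_gt hlt] using pay_nonneg hca_nonneg
  rcases le_or_gt b ω with hω | hω
  · rw [pay_self_of_le hω, pay_of_lt_of_le hca (hca.le.trans hω)]
    exact (by ring : 2 * c * (b / 2) = c * b).le
  · simpa [pay_eq_zero_of_wtp_lt hω] using pay_nonneg hca_nonneg

end Pay

lemma forall_sum_le_sum_iff {ι M : Type*} {A : ι → Type*} [Fintype ι] [AddCommMonoid M]
    [LinearOrder M] [IsOrderedCancelAddMonoid M] {F : ∀ i, A i → M} {p : ∀ i, A i} :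
    (∀ q : ∀ i, A i, ∑ i, F i (q i) ≤ ∑ i, F i (p i)) ↔ ∀ i a, F i a ≤ F i (p i) := by
  refine ⟨fun h i a => ?_, fun h q => Finset.sum_le_sum fun i _ => h i (q i)⟩
  by_contra! hlt
  refine (h (Function.update p i a)).not_gt (Finset.sum_lt_sum (fun j _ => ?_) ⟨i, ?_⟩)
  · rcases eq_or_ne j i with rfl | hji
    · simpa using hlt.le
    · simp [hji]
  · simpa using hlt

lemma sum_mul_le_sum_mul_of_pos_weight {ι : Type*} {I : Finset ι} {w f g : ι → ℝ}
    (hw : ∀ i ∈ I, 0 ≤ w i) (h : ∀ i ∈ I, 0 < w i → f i ≤ g i) :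
    ∑ i ∈ I, w i * f i ≤ ∑ i ∈ I, w i * g i := by
  refine Finset.sum_le_sum fun i hi => ?_
  rcases (hw i hi).eq_or_lt with hwi | hwi
  · simp [← hwi]
  · exact mul_le_mul_of_nonneg_left (h i hi hwi) hwi.le

section SingleFirm

variable {ι : Type*} {I : Finset ι} {w b v : ι → ℝ} {a x : ℝ} {i : ι}

/-- Expected profit of quoting `a` against finitely many states `i ∈ I`: state `i` has weight
`w i`, and in it the rival quotes `b i` and the WTP is `v i`. For a firm that has received its
signal, a state is a pair (rival's signal, WTP). The weights are not normalized, so this is the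
interim profit times the probability of the signal. -/
noncomputable def interimProfit (I : Finset ι) (w b v : ι → ℝ) (a : ℝ) : ℝ :=
  ∑ i ∈ I, w i * pay a (b i) (v i)

/-- The quote `x` is optimal for a firm facing the states `i ∈ I`. -/
def IsBestQuote (I : Finset ι) (w b v : ι → ℝ) (x : ℝ) : Prop :=
  ∀ a, interimProfit I w b v a ≤ interimProfit I w b v x

lemma interimProfit_zero : interimProfit I w b v 0 = 0 := by
  simp [interimProfit, pay_zero_left]

lemma interimProfit_nonpos (hw : ∀ i ∈ I, 0 ≤ w i) (ha : a ≤ 0) :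
    interimProfit I w b v a ≤ 0 :=
  Finset.sum_nonpos fun i hi => mul_nonpos_of_nonneg_of_nonpos (hw i hi) (pay_nonpos ha)

lemma pos_of_interimProfit_pos (hw : ∀ i ∈ I, 0 ≤ w i) (hpos : 0 < interimProfit I w b v x) :
    0 < x := by
  by_contra! hx
  exact (interimProfit_nonpos hw hx).not_gt hpos

lemma interimProfit_neg (hw : ∀ i ∈ I, 0 ≤ w i) (ha : a < 0) (hi : i ∈ I) (hwi : 0 < w i)
    (hab : a ≤ b i) (hav : a ≤ v i) : interimProfit I w b v a < 0 :=
  Finset.sum_neg' (fun j hj => mul_nonpos_of_nonneg_of_nonpos (hw j hj) (pay_nonpos ha.le))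
    ⟨i, hi, mul_neg_of_pos_of_neg hwi (pay_neg ha hab hav)⟩

lemma interimProfit_pos (hw : ∀ i ∈ I, 0 ≤ w i) (ha : 0 < a) (hi : i ∈ I) (hwi : 0 < w i)
    (hab : a < b i) (hav : a ≤ v i) : 0 < interimProfit I w b v a :=
  Finset.sum_pos' (fun j hj => mul_nonneg (hw j hj) (pay_nonneg ha.le))
    ⟨i, hi, mul_pos hwi ((pay_of_lt_of_le hab hav).symm ▸ ha)⟩

lemma two_mul_mul_interimProfit_le {c : ℝ} (hw : ∀ i ∈ I, 0 ≤ w i) (ha : 0 < a)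
    (hba : ∀ i ∈ I, 0 < w i → b i ≤ a) (hc₀ : 0 ≤ c) (hc₁ : c < 1) :
    2 * c * interimProfit I w b v a ≤ interimProfit I w b v (c * a) := by
  calc 2 * c * interimProfit I w b v a
      = ∑ i ∈ I, w i * (2 * c * pay a (b i) (v i)) := by
        simp only [interimProfit, Finset.mul_sum, mul_left_comm]
    _ ≤ interimProfit I w b v (c * a) :=
        sum_mul_le_sum_mul_of_pos_weight hw fun i hi hwi =>
          two_mul_mul_pay_le_pay_mul ha (hba i hi hwi) hc₀ hc₁

lemma isBestQuote_of_eq_zero (hw : ∀ i ∈ I, 0 ≤ w i)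
    (h : ∀ i ∈ I, 0 < w i → x = 0 ∧ b i = 0) : IsBestQuote I w b v x := by
  refine fun a => sum_mul_le_sum_mul_of_pos_weight hw fun i hi hwi => ?_
  obtain ⟨rfl, hbi⟩ := h i hi hwi
  rw [hbi, pay_zero_left]
  exact pay_zero_right_nonpos

namespace IsBestQuote

lemma lt_of_neg (hx : IsBestQuote I w b v x) (hw : ∀ i ∈ I, 0 ≤ w i) (hi : i ∈ I)
    (hwi : 0 < w i) (hvi : 0 ≤ v i) (hneg : x < 0) : b i < x := by
  by_contra! hle
  have hloss : interimProfit I w b v x < 0 :=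
    interimProfit_neg hw hneg hi hwi hle (hneg.le.trans hvi)
  exact (hx 0).not_gt (hloss.trans_eq interimProfit_zero.symm)

lemma interimProfit_pos_of_rival_pos (hx : IsBestQuote I w b v x) (hw : ∀ i ∈ I, 0 ≤ w i)
    (hi : i ∈ I) (hwi : 0 < w i) (hvi : 0 < v i) (hbi : 0 < b i) : 0 < interimProfit I w b v x := by
  obtain ⟨a, ha, hlt⟩ := exists_between (lt_min hbi hvi)
  obtain ⟨hab, hav⟩ := lt_min_iff.1 hlt
  exact (interimProfit_pos hw ha hi hwi hab hav.le).trans_le (hx a)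

lemma exists_lt_of_interimProfit_pos (hx : IsBestQuote I w b v x) (hw : ∀ i ∈ I, 0 ≤ w i)
    (hpos : 0 < interimProfit I w b v x) : ∃ i ∈ I, 0 < w i ∧ x < b i := by
  by_contra! hle
  have hgain : 2 * (3 / 4) * interimProfit I w b v x ≤ interimProfit I w b v (3 / 4 * x) :=
    two_mul_mul_interimProfit_le hw (pos_of_interimProfit_pos hw hpos) hle
      (by norm_num) (by norm_num)
  linarith [hx (3 / 4 * x)]

end IsBestQuote

end SingleFirm

section Game

variable {S T : Type*} {μ : S → T → ℝ → ℝ} {Ω : Finset ℝ} {p : S → ℝ} {r : T → ℝ} {s : S} {t : T}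

/-- The signals `s` and `t` are received together with positive probability. -/
def Compatible (μ : S → T → ℝ → ℝ) (Ω : Finset ℝ) (s : S) (t : T) : Prop :=
  ∃ ω ∈ Ω, 0 < μ s t ω

lemma marginal_pos_iff_exists_compatible [Fintype T] (hμ : ∀ t, ∀ ω ∈ Ω, 0 ≤ μ s t ω) :
    0 < ∑ t, ∑ ω ∈ Ω, μ s t ω ↔ ∃ t, Compatible μ Ω s t := by
  rw [Finset.sum_pos_iff_of_nonneg fun t _ => Finset.sum_nonneg (hμ t)]
  simp only [Finset.mem_univ, true_and, Compatible, Finset.sum_pos_iff_of_nonneg (hμ _)]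

variable [Fintype S] [Fintype T]

/-- The strategy `p` is a best reply of the first firm to the strategy `r` of the second. Best
replies of the second firm are expressed by swapping the two signals in `μ`. -/
def IsBestReply (μ : S → T → ℝ → ℝ) (Ω : Finset ℝ) (p : S → ℝ) (r : T → ℝ) : Prop :=
  ∀ q, expProfit1 μ Ω q r ≤ expProfit1 μ Ω p r

lemma expProfit2_eq_expProfit1_swap :
    expProfit2 μ Ω p r = expProfit1 (Function.swap μ) Ω r p :=
  Finset.sum_comm

lemma isBNE2_iff_isBestReply :
    isBNE2 μ Ω p r ↔ IsBestReply μ Ω p r ∧ IsBestReply (Function.swap μ) Ω r p := by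
  simp only [isBNE2, IsBestReply, expProfit2_eq_expProfit1_swap]

lemma expProfit1_eq_sum_interimProfit :
    expProfit1 μ Ω p r = ∑ s, interimProfit (Finset.univ ×ˢ Ω) (fun i => μ s i.1 i.2)
      (fun i => r i.1) (fun i => i.2) (p s) := by
  simp only [expProfit1, interimProfit, Finset.sum_product]

lemma isBestReply_iff_forall_isBestQuote :
    IsBestReply μ Ω p r ↔ ∀ s, IsBestQuote (Finset.univ ×ˢ Ω) (fun i => μ s i.1 i.2)
      (fun i => r i.1) (fun i => i.2) (p s) := by
  simp only [IsBestReply, expProfit1_eq_sum_interimProfit]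
  exact forall_sum_le_sum_iff

lemma isBestReply_of_eq_zero (hμ : ∀ s t, ∀ ω ∈ Ω, 0 ≤ μ s t ω)
    (h : ∀ s t, Compatible μ Ω s t → p s = 0 ∧ r t = 0) : IsBestReply μ Ω p r :=
  isBestReply_iff_forall_isBestQuote.2 fun s =>
    isBestQuote_of_eq_zero (fun i hi => hμ s i.1 i.2 (Finset.mem_product.1 hi).2)
      fun i hi hwi => h s i.1 ⟨i.2, (Finset.mem_product.1 hi).2, hwi⟩

namespace IsBestReply

lemma lt_of_neg (hp : IsBestReply μ Ω p r) (hΩ : ∀ ω ∈ Ω, 0 ≤ ω)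
    (hμ : ∀ s t, ∀ ω ∈ Ω, 0 ≤ μ s t ω) (hst : Compatible μ Ω s t) (hneg : p s < 0) :
    r t < p s := by
  obtain ⟨ω, hω, hpos⟩ := hst
  exact (isBestReply_iff_forall_isBestQuote.1 hp s).lt_of_neg
    (fun i hi => hμ s i.1 i.2 (Finset.mem_product.1 hi).2) (i := (t, ω)) (by simpa using hω)
    hpos (hΩ ω hω) hneg

lemma pos_and_exists_lt (hp : IsBestReply μ Ω p r) (hΩ : ∀ ω ∈ Ω, 0 < ω)
    (hμ : ∀ s t, ∀ ω ∈ Ω, 0 ≤ μ s t ω) (hst : Compatible μ Ω s t) (hrt : 0 < r t) :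
    0 < p s ∧ ∃ t', Compatible μ Ω s t' ∧ p s < r t' := by
  obtain ⟨ω, hω, hpos⟩ := hst
  have hw : ∀ i ∈ (Finset.univ : Finset T) ×ˢ Ω, 0 ≤ μ s i.1 i.2 := fun i hi =>
    hμ s i.1 i.2 (Finset.mem_product.1 hi).2
  have hbest := isBestReply_iff_forall_isBestQuote.1 hp s
  have hprofit := hbest.interimProfit_pos_of_rival_pos hw (i := (t, ω)) (by simpa using hω) hpos
    (hΩ ω hω) hrt
  obtain ⟨⟨t', ω'⟩, hmem, hpos', hlt⟩ := hbest.exists_lt_of_interimProfit_pos hw hprofit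
  exact ⟨pos_of_interimProfit_pos hw hprofit,
    t', ⟨ω', (Finset.mem_product.1 hmem).2, hpos'⟩, hlt⟩

lemma exists_gt_of_pos (hp : IsBestReply μ Ω p r) (hr : IsBestReply (Function.swap μ) Ω r p)
    (hΩ : ∀ ω ∈ Ω, 0 < ω) (hμ : ∀ s t, ∀ ω ∈ Ω, 0 ≤ μ s t ω) (hst : Compatible μ Ω s t)
    (hps : 0 < p s) : ∃ s' t', Compatible μ Ω s' t' ∧ p s < p s' := by
  obtain ⟨hrt, -⟩ := hr.pos_and_exists_lt hΩ (fun t s => hμ s t) hst hps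
  obtain ⟨-, t', hst', hpr⟩ := hp.pos_and_exists_lt hΩ hμ hst hrt
  obtain ⟨-, s', hst'', hrp⟩ := hr.pos_and_exists_lt hΩ (fun t s => hμ s t) hst' hps
  exact ⟨s', t', hst'', hpr.trans hrp⟩

lemma nonpos (hp : IsBestReply μ Ω p r) (hr : IsBestReply (Function.swap μ) Ω r p)
    (hΩ : ∀ ω ∈ Ω, 0 < ω) (hμ : ∀ s t, ∀ ω ∈ Ω, 0 ≤ μ s t ω) (hst : Compatible μ Ω s t) :
    p s ≤ 0 := by
  obtain ⟨m, ⟨u, hmu⟩, hmax⟩ :=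
    Set.exists_max_image {s | ∃ t, Compatible μ Ω s t} p (Set.toFinite _) ⟨s, t, hst⟩
  refine (hmax s ⟨t, hst⟩).trans (not_lt.1 fun hpm => ?_)
  obtain ⟨s', t', hst', hlt⟩ := hp.exists_gt_of_pos hr hΩ hμ hmu hpm
  exact (hmax s' ⟨t', hst'⟩).not_gt hlt

lemma eq_zero (hp : IsBestReply μ Ω p r) (hr : IsBestReply (Function.swap μ) Ω r p)
    (hΩ : ∀ ω ∈ Ω, 0 < ω) (hμ : ∀ s t, ∀ ω ∈ Ω, 0 ≤ μ s t ω) (hst : Compatible μ Ω s t) :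
    p s = 0 := by
  refine (hp.nonpos hr hΩ hμ hst).eq_of_not_lt fun hneg => ?_
  have hrp : r t < p s := hp.lt_of_neg (fun ω hω => (hΩ ω hω).le) hμ hst hneg
  have hpr : p s < r t :=
    hr.lt_of_neg (fun ω hω => (hΩ ω hω).le) (fun t s => hμ s t) hst (hrp.trans hneg)
  exact hrp.not_gt hpr

end IsBestReply

lemma isBNE2_iff_eq_zero_of_compatible (hΩ : ∀ ω ∈ Ω, 0 < ω)
    (hμ : ∀ s t, ∀ ω ∈ Ω, 0 ≤ μ s t ω) :
    isBNE2 μ Ω p r ↔ ∀ s t, Compatible μ Ω s t → p s = 0 ∧ r t = 0 := by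
  rw [isBNE2_iff_isBestReply]
  constructor
  · rintro ⟨hp, hr⟩ s t hst
    exact ⟨hp.eq_zero hr hΩ hμ hst, hr.eq_zero hp hΩ (fun t s => hμ s t) hst⟩
  · intro h
    exact ⟨isBestReply_of_eq_zero hμ h,
      isBestReply_of_eq_zero (fun t s => hμ s t) fun t s hst => (h s t hst).symm⟩

end Game

/-- with exactly two firms, a strategy profile is a Bayesian Nash equilibrium
iff each firm quotes `0` at every signal having strictly positive marginal probability. -/
theorem two_firm_BNE_iff_zero_on_positive_marginals
    {S₁ S₂ : Type*} [Fintype S₁] [Fintype S₂]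
    (Ω : Finset ℝ) (hΩpos : ∀ ω ∈ Ω, 0 < ω)
    (μ : S₁ → S₂ → ℝ → ℝ)
    (hμ0 : ∀ s₁ s₂ ω, 0 ≤ μ s₁ s₂ ω)
    (hμ1 : ∑ s₁ : S₁, ∑ s₂ : S₂, ∑ ω ∈ Ω, μ s₁ s₂ ω = 1)
    (p₁ : S₁ → ℝ) (p₂ : S₂ → ℝ) :
    isBNE2 μ Ω p₁ p₂ ↔
      ((∀ s₁ : S₁, 0 < ∑ s₂ : S₂, ∑ ω ∈ Ω, μ s₁ s₂ ω → p₁ s₁ = 0) ∧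
       (∀ s₂ : S₂, 0 < ∑ s₁ : S₁, ∑ ω ∈ Ω, μ s₁ s₂ ω → p₂ s₂ = 0)) := by
  have hμ : ∀ s₁ s₂, ∀ ω ∈ Ω, 0 ≤ μ s₁ s₂ ω := fun s₁ s₂ ω _ => hμ0 s₁ s₂ ω
  have marginal₁ (s₁ : S₁) : 0 < ∑ s₂, ∑ ω ∈ Ω, μ s₁ s₂ ω ↔ ∃ s₂, Compatible μ Ω s₁ s₂ :=
    marginal_pos_iff_exists_compatible (hμ s₁)
  have marginal₂ (s₂ : S₂) : 0 < ∑ s₁, ∑ ω ∈ Ω, μ s₁ s₂ ω ↔ ∃ s₁, Compatible μ Ω s₁ s₂ :=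
    marginal_pos_iff_exists_compatible (μ := Function.swap μ) fun s₁ => hμ s₁ s₂
  rw [isBNE2_iff_eq_zero_of_compatible hΩpos hμ]
  simp only [marginal₁, marginal₂, forall_exists_index]
  exact ⟨fun h => ⟨fun s₁ s₂ hc => (h s₁ s₂ hc).1, fun s₂ s₁ hc => (h s₁ s₂ hc).2⟩,
    fun h s₁ s₂ hc => ⟨h.1 s₁ s₂ hc, h.2 s₂ s₁ hc⟩⟩
end
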